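/- arXiv:0706.2354 — 4 statements merged into one kernel-verified Lean document; each statement's English description precedes it below -/
import Mathlib

section
/- Let $Q \subset \mathbb{R}^d$ be an integral polytope (the convex hull of finitely many points of $\mathbb{Z}^d$), and let $M \in \mathbb{R}$ be such that $Q \subseteq \{x \in \mathbb{R}^d : |x_i| \le M \text{ for } i = 1, \dots, d\}$. Let $x^* \in Q$ and $\delta > 0$. Then for every integer $k \ge \frac{2}{\delta} d M$, there exists a point $x \in Q \cap \frac{1}{k}\mathbb{Z}^d$ with $\|x - x^*\|_\infty \le \delta$. -/
/-- grid approximation in an integral polytope. If `Q` is the convex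
hull of finitely many integer points, bounded in sup-norm by `M`, `x* ∈ Q` and
`δ > 0`, then for every integer `k ≥ (2/δ)·d·M` there is a point of
`Q ∩ (1/k)ℤ^d` within sup-norm distance `δ` of `x*`. -/
theorem stmt_1 (d : ℕ) (V : Finset (Fin d → ℤ)) (Q : Set (Fin d → ℝ))
    (hQ : Q = convexHull ℝ ((fun v : Fin d → ℤ => fun i => (v i : ℝ)) '' (V : Set (Fin d → ℤ))))
    (M : ℝ) (hM : ∀ x ∈ Q, ∀ i, |x i| ≤ M)
    (xstar : Fin d → ℝ) (hx : xstar ∈ Q) (δ : ℝ) (hδ : 0 < δ)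
    (k : ℤ) (hk : (2 / δ) * (d : ℝ) * M ≤ (k : ℝ)) :
    ∃ x ∈ Q, (∀ i, ∃ n : ℤ, x i = (n : ℝ) / (k : ℝ)) ∧ ‖x - xstar‖ ≤ δ := by
  rcases Nat.eq_zero_or_pos d with hd | hd
  · subst hd
    exact ⟨xstar, hx, fun i => i.elim0, by rw [sub_self, norm_zero]; exact hδ.le⟩
  have i0 : Fin d := ⟨0, hd⟩
  have hM0 : 0 ≤ M := (abs_nonneg _).trans (hM xstar hx i0)
  rcases hM0.eq_or_lt with hM1 | hMpos
  · refine ⟨xstar, hx, fun i => ⟨0, ?_⟩, by simpa using hδ.le⟩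
    have := hM xstar hx i
    rw [← hM1] at this
    simpa using this
  have hdR : (0 : ℝ) < d := by exact_mod_cast hd
  have hkpos : (0 : ℝ) < k := lt_of_lt_of_le (by positivity) hk
  have hbound : (d : ℝ) * (1 / k * (2 * M)) ≤ δ := by
    have h1 : 2 * d * M ≤ δ * k := by
      have := mul_le_mul_of_nonneg_left hk hδ.le
      calc 2 * d * M = δ * (2 / δ * d * M) := by field_simp
        _ ≤ _ := this
    have h2 : (d : ℝ) * (1 / k * (2 * M)) = 2 * d * M / k := by ring
    rw [h2, div_le_iff₀ hkpos]
    exact h1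
  have hx' := hx
  rw [hQ] at hx'
  obtain ⟨ι, _, z, w, hz, hind, hw, hw1, hwx⟩ := eq_pos_convex_span_of_mem_convexHull hx'
  classical
  have hcard : Fintype.card ι ≤ d + 1 := by
    have h1 := hind.card_le_finrank_succ
    have h2 := Submodule.finrank_le (vectorSpan ℝ (Set.range z))
    rw [Module.finrank_fin_fun] at h2
    omega
  have hne : Nonempty ι := by
    by_contra h
    rw [not_nonempty_iff] at h
    simp at hw1
  obtain ⟨j0⟩ := hne
  have hzQ : ∀ j, z j ∈ Q := fun j => by
    rw [hQ]; exact subset_convexHull _ _ (hz ⟨j, rfl⟩)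
  have hzint : ∀ j, ∃ v : Fin d → ℤ, ∀ i, z j i = v i := fun j => by
    obtain ⟨v, _, hv⟩ := hz ⟨j, rfl⟩
    exact ⟨v, fun i => by rw [← hv]⟩
  choose v hv using hzint
  let f : ι → ℤ := fun j => ⌊(k : ℝ) * w j⌋
  let u : ι → ℝ := fun j => (f j : ℝ) / k
  have hu0 : ∀ j, 0 ≤ u j := fun j => by
    have : 0 ≤ f j := Int.floor_nonneg.2 (mul_nonneg hkpos.le (hw j).le)
    have : (0 : ℝ) ≤ f j := by exact_mod_cast this
    exact div_nonneg this hkpos.le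
  have huw : ∀ j, u j ≤ w j := fun j => by
    rw [div_le_iff₀ hkpos, mul_comm]; exact Int.floor_le _
  have huw2 : ∀ j, w j - u j ≤ 1 / k := fun j => by
    have h := (Int.lt_floor_add_one ((k : ℝ) * w j)).le
    have : w j ≤ ((f j : ℝ) + 1) / k := by
      rw [le_div_iff₀ hkpos, mul_comm]; exact h
    rw [add_div] at this
    show w j - (f j : ℝ) / k ≤ 1 / k
    linarith
  have husum : ∑ j, u j ≤ 1 := hw1 ▸ Finset.sum_le_sum fun j _ => huw j
  have key : ∀ a : ι → ℝ, ∀ i, (z j0 + ∑ j, a j • (z j - z j0)) i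
      = z j0 i + ∑ j, a j * (z j i - z j0 i) := fun a i => by
    simp [Finset.sum_apply]
  have hxs : xstar = z j0 + ∑ j, w j • (z j - z j0) := by
    simp only [smul_sub, Finset.sum_sub_distrib, ← Finset.sum_smul, hw1, hwx, one_smul]
    abel
  refine ⟨z j0 + ∑ j, u j • (z j - z j0), ?_, fun i => ?_, ?_⟩
  · have hconv : Convex ℝ Q := hQ ▸ convex_convexHull ℝ _
    have : z j0 + ∑ j, u j • (z j - z j0)
        = ∑ j, (u j + if j = j0 then 1 - ∑ j, u j else 0) • z j := by
      simp only [smul_sub, Finset.sum_sub_distrib, ← Finset.sum_smul, add_smul,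
        Finset.sum_add_distrib, ite_smul, zero_smul, Finset.sum_ite_eq', Finset.mem_univ, if_true,
        sub_smul, one_smul]
      abel
    rw [this]
    refine hconv.sum_mem (fun j _ => ?_) ?_ (fun j _ => hzQ j)
    · have := hu0 j
      split_ifs <;> linarith
    · simp [Finset.sum_add_distrib]
  · refine ⟨k * v j0 i + ∑ j, f j * (v j i - v j0 i), ?_⟩
    rw [key]
    push_cast
    rw [add_div, mul_div_cancel_left₀ _ hkpos.ne', Finset.sum_div, hv]
    congr 1
    refine Finset.sum_congr rfl fun j _ => ?_
    rw [hv, div_mul_eq_mul_div]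
  · rw [pi_norm_le_iff_of_nonneg hδ.le]
    intro i
    rw [Pi.sub_apply, hxs, key, key, add_sub_add_left_eq_sub, ← Finset.sum_sub_distrib,
      Real.norm_eq_abs]
    rw [← Finset.sum_erase (a := j0) Finset.univ (by simp)]
    refine (Finset.abs_sum_le_sum_abs _ _).trans (le_trans (Finset.sum_le_card_nsmul _ _
      (1 / k * (2 * M)) fun j _ => ?_) ?_)
    · rw [← sub_mul, abs_mul]
      have h1 : |u j - w j| ≤ 1 / k := by
        rw [abs_sub_comm, abs_of_nonneg (sub_nonneg.2 (huw j))]; exact huw2 j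
      have h2 : |z j i - z j0 i| ≤ 2 * M := by
        have a := hM _ (hzQ j) i
        have b := hM _ (hzQ j0) i
        have := abs_sub (z j i) (z j0 i)
        linarith
      exact mul_le_mul h1 h2 (abs_nonneg _) (by positivity)
    · refine le_trans ?_ hbound
      rw [nsmul_eq_mul]
      refine mul_le_mul_of_nonneg_right ?_ (by positivity)
      rw [Finset.card_erase_of_mem (Finset.mem_univ _), Finset.card_univ]
      exact_mod_cast (by omega : Fintype.card ι - 1 ≤ d)
end

section
/- Let $P = \{(x,z) \in \mathbb{R}^{d_1} \times \mathbb{R}^{d_2} : Ax + Bz \le b\}$ be a polytope with $A \in \mathbb{Z}^{p \times d_1}$, $B \in \mathbb{Z}^{p \times d_2}$, $b \in \mathbb{Z}^p$, and let $M \in \mathbb{R}$ satisfy $P \subseteq \{(x,z) : |x_i| \le M \text{ for } i = 1, \dots, d_1\}$. Then there exists a positive integer $\Delta$ such that for every $(x^*, z^*) \in P \cap (\mathbb{R}^{d_1} \times \mathbb{Z}^{d_2})$ and every $\delta > 0$ the following holds: for every $m = k\Delta$ with $k$ an integer satisfying $k \ge \frac{2}{\delta} d_1 M$, there exists a lattice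 point $x \in \frac{1}{m}\mathbb{Z}^{d_1}$ such that $(x, z^*) \in P$ and $\|x - x^*\|_\infty \le \delta$. -/
open Matrix in
lemma vertex_aux (p d : ℕ) (A : Fin p → Fin d → ℤ) :
    ∃ Δ : ℕ, 0 < Δ ∧ ∀ (c : Fin p → ℤ) (x : Fin d → ℝ),
      x ∈ Set.extremePoints ℝ {x : Fin d → ℝ | ∀ i, ∑ j, (A i j : ℝ) * x j ≤ (c i : ℝ)} →
      ∀ j, ∃ n : ℤ, (Δ : ℝ) * x j = n := by
  classical
  let AI : Finset (Fin p) → Matrix (Fin p) (Fin d) ℤ := fun I =>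
    Matrix.of fun i j => if i ∈ I then A i j else 0
  let G : Finset (Fin p) → Matrix (Fin d) (Fin d) ℤ := fun I => (AI I)ᵀ * AI I
  let D : Finset (Fin p) → ℕ := fun I => if (G I).det = 0 then 1 else (G I).det.natAbs
  refine ⟨∏ I, D I, Finset.prod_pos fun I _ => ?_, ?_⟩
  · simp only [D]
    split_ifs with h
    · exact one_pos
    · exact Int.natAbs_pos.mpr h
  intro c x hx
  obtain ⟨hxQ, hext⟩ := mem_extremePoints.1 hx
  simp only [Set.mem_setOf_eq] at hxQ hext
  let I : Finset (Fin p) := Finset.univ.filter fun i => ∑ j, (A i j : ℝ) * x j = c i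
  let R : Matrix (Fin p) (Fin d) ℝ := (AI I).map (Int.cast : ℤ → ℝ)
  have hR : ∀ (y : Fin d → ℝ) i, (R *ᵥ y) i = if i ∈ I then ∑ j, (A i j : ℝ) * y j else 0 := by
    intro y i
    simp only [R, AI, Matrix.mulVec, dotProduct, Matrix.map_apply, Matrix.of_apply]
    split_ifs <;> simp
  -- trivial kernel
  have hker : ∀ y : Fin d → ℝ, R *ᵥ y = 0 → y = 0 := by
    intro y hy
    have hev : ∀ᶠ ε in nhds (0:ℝ), ∀ i, ((∑ j, (A i j : ℝ) * x j) + ε * (∑ j, (A i j : ℝ) * y j) ≤ c i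
        ∧ (∑ j, (A i j : ℝ) * x j) - ε * (∑ j, (A i j : ℝ) * y j) ≤ c i) := by
      rw [Filter.eventually_all]
      intro i
      by_cases hi : i ∈ I
      · have h0 : ∑ j, (A i j : ℝ) * y j = 0 := by
          have := congrFun hy i
          rw [hR, if_pos hi] at this
          exact this
        refine Filter.Eventually.of_forall fun ε => ?_
        rw [h0]
        simpa using hxQ i
      · have hlt : ∑ j, (A i j : ℝ) * x j < c i :=
          lt_of_le_of_ne (hxQ i) (fun h => hi (by simp [I, h]))
        have c1 : ContinuousAt (fun ε : ℝ => (∑ j, (A i j : ℝ) * x j) + ε * (∑ j, (A i j : ℝ) * y j)) 0 := by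
          fun_prop
        have c2 : ContinuousAt (fun ε : ℝ => (∑ j, (A i j : ℝ) * x j) - ε * (∑ j, (A i j : ℝ) * y j)) 0 := by
          fun_prop
        have e1 := c1.eventually_lt (continuousAt_const (y := (c i : ℝ))) (by simpa using hlt)
        have e2 := c2.eventually_lt (continuousAt_const (y := (c i : ℝ))) (by simpa using hlt)
        filter_upwards [e1, e2] with ε h1 h2
        exact ⟨h1.le, h2.le⟩
    obtain ⟨ε, hε, hεpos⟩ := ((hev.filter_mono nhdsWithin_le_nhds).and
      (self_mem_nhdsWithin : Set.Ioi (0:ℝ) ∈ nhdsWithin 0 (Set.Ioi 0))).exists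
    have hεpos : 0 < ε := hεpos
    have key := hext (x + ε • y) (fun i => by
      have := (hε i).1
      simpa [mul_add, Finset.sum_add_distrib, Finset.mul_sum, mul_left_comm] using this)
      (x - ε • y) (fun i => by
      have := (hε i).2
      simpa [mul_sub, Finset.sum_sub_distrib, Finset.mul_sum, mul_left_comm] using this)
      ⟨1/2, 1/2, by norm_num, by norm_num, by norm_num, by ext j; simp; ring⟩
    have h2 := key.1
    have : ε • y = 0 := by simpa using h2
    exact (smul_eq_zero.1 this).resolve_left hεpos.ne'
  have hdet : (G I).det ≠ 0 := by
    intro h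
    have hG : ((G I).map (Int.cast : ℤ → ℝ)) = Rᵀ * R := by
      ext i j
      simp [G, R, Matrix.mul_apply]
    have h' : (Rᵀ * R).det = 0 := by
      rw [← hG]
      have := (Int.castRingHom ℝ).map_det (G I)
      rw [h] at this
      simpa [RingHom.mapMatrix_apply] using this.symm
    obtain ⟨v, hv0, hv⟩ := Matrix.exists_mulVec_eq_zero_iff.2 h'
    apply hv0
    apply hker
    rw [← Matrix.mulVec_mulVec] at hv
    have : (R *ᵥ v) ⬝ᵥ (R *ᵥ v) = 0 := by
      rw [Matrix.dotProduct_mulVec, Matrix.vecMul_mulVec] 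
      rw [← Matrix.mulVec_transpose]
      simp [← Matrix.mulVec_mulVec, hv]
    exact dotProduct_self_eq_zero.1 this
  -- integrality
  let cI : Fin p → ℤ := fun i => if i ∈ I then c i else 0
  have hRx : R *ᵥ x = fun i => (cI i : ℝ) := by
    funext i
    rw [hR]
    simp only [cI]
    split_ifs with h
    · simpa [I] using h
    · simp
  have hDx : ∀ j, ((G I).det : ℝ) * x j = (((G I).adjugate *ᵥ ((AI I)ᵀ *ᵥ cI)) j : ℤ) := by
    intro j
    have e1 : ((G I).map (Int.cast : ℤ → ℝ)) *ᵥ x = fun i => ((((AI I)ᵀ *ᵥ cI) i : ℤ) : ℝ) := by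
      have hG : ((G I).map (Int.cast : ℤ → ℝ)) = Rᵀ * R := by
        ext i j
        simp [G, R, Matrix.mul_apply]
      rw [hG, ← Matrix.mulVec_mulVec, hRx]
      funext i
      simp [R, Matrix.mulVec, dotProduct]
    have e2 : ((G I).adjugate.map (Int.cast : ℤ → ℝ)) * ((G I).map (Int.cast : ℤ → ℝ))
        = ((G I).det : ℝ) • (1 : Matrix (Fin d) (Fin d) ℝ) := by
      have := congrArg (fun N : Matrix (Fin d) (Fin d) ℤ => (Int.castRingHom ℝ).mapMatrix N)
        (Matrix.adjugate_mul (G I))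
      simp only [map_mul] at this
      refine this.trans ?_
      ext a b
      rw [RingHom.mapMatrix_apply, Matrix.map_apply, Matrix.smul_apply, Matrix.smul_apply]
      by_cases hab : a = b
      · subst hab
        simp
      · simp [Matrix.one_apply_ne hab]
    have e3 := congrArg (fun v => ((G I).adjugate.map (Int.cast : ℤ → ℝ)) *ᵥ v) e1
    simp only [Matrix.mulVec_mulVec, e2] at e3
    have e4 := congrFun e3 j
    simp only [Matrix.smul_mulVec, Matrix.one_mulVec, Pi.smul_apply, smul_eq_mul] at e4
    rw [e4]
    simp [Matrix.mulVec, dotProduct]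
  intro j
  have hdvd : (G I).det ∣ ((∏ I, D I : ℕ) : ℤ) := by
    have h1 : D I ∣ ∏ I, D I := Finset.dvd_prod_of_mem D (Finset.mem_univ I)
    simp only [D, if_neg hdet] at h1
    exact Int.dvd_natCast.2 h1
  obtain ⟨q, hq⟩ := hdvd
  refine ⟨q * ((G I).adjugate *ᵥ ((AI I)ᵀ *ᵥ cI)) j, ?_⟩
  have hq' : ((∏ I, D I : ℕ) : ℝ) = ((G I).det : ℝ) * q := by exact_mod_cast hq
  rw [hq', Int.cast_mul, ← hDx j]
  ring

/-- rounding of a convex combination -/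
lemma round_aux {d : ℕ} (Δ : ℕ) (hΔ : 0 < Δ) (V : Set (Fin d → ℝ)) (M : ℝ)
    (hV : ∀ v ∈ V, ∀ j, |v j| ≤ M) (hint : ∀ v ∈ V, ∀ j, ∃ n : ℤ, (Δ : ℝ) * v j = n)
    (x : Fin d → ℝ) (hx : x ∈ convexHull ℝ V) (k : ℤ) (hk : 0 < k) :
    ∃ y ∈ convexHull ℝ V, (∀ i, ∃ n : ℤ, y i = (n : ℝ) / ((k : ℝ) * (Δ : ℝ))) ∧
      ∀ j, |y j - x j| ≤ d * (2 * M) / k := by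
  classical
  obtain ⟨ι, _, z, w, hz, hai, hw, hw1, hwx⟩ := eq_pos_convex_span_of_mem_convexHull hx
  have hzV : ∀ i, z i ∈ V := fun i => hz ⟨i, rfl⟩
  have hcard : Fintype.card ι ≤ d + 1 := by
    have := hai.card_le_finrank_succ
    have h2 : Module.finrank ℝ (vectorSpan ℝ (Set.range z)) ≤ d := by
      simpa using Submodule.finrank_le (vectorSpan ℝ (Set.range z))
    omega
  have hne : Nonempty ι := by
    by_contra h
    rw [not_nonempty_iff] at h
    simp at hw1
  obtain ⟨i0⟩ := hne
  have hkR : (0:ℝ) < k := by exact_mod_cast hk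
  have hΔR : (0:ℝ) < Δ := by exact_mod_cast hΔ
  let S : Finset ι := Finset.univ.erase i0
  have hS : (S.card : ℝ) ≤ d := by
    have : S.card ≤ d := by
      rw [Finset.card_erase_of_mem (Finset.mem_univ _), Finset.card_univ]; omega
    exact_mod_cast this
  let N : ι → ℤ := fun i => if i = i0 then k - ∑ i ∈ S, ⌊k * w i⌋ else ⌊k * w i⌋
  have hNS : ∀ i ∈ S, N i = ⌊k * w i⌋ := fun i hi => if_neg (Finset.ne_of_mem_erase hi)
  have hN0 : N i0 = k - ∑ i ∈ S, ⌊k * w i⌋ := if_pos rfl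
  have split : ∀ f : ι → ℝ, ∑ i, f i = f i0 + ∑ i ∈ S, f i := fun f =>
    (Finset.add_sum_erase _ f (Finset.mem_univ i0)).symm
  have hNsum : ∑ i, (N i : ℝ) = k := by
    have h : ∑ i ∈ S, (N i : ℝ) = ∑ i ∈ S, ((⌊k * w i⌋ : ℤ) : ℝ) :=
      Finset.sum_congr rfl (fun i hi => by rw [hNS i hi])
    rw [split, hN0, h]
    push_cast
    ring
  have hw0 : w i0 = 1 - ∑ i ∈ S, w i := by
    have := split w
    linarith
  have hNnn : ∀ i, (0:ℝ) ≤ N i := by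
    intro i
    by_cases h : i = i0
    · subst h
      rw [hN0]
      push_cast
      have h1 : ∑ i ∈ S, ((⌊k * w i⌋ : ℤ) : ℝ) ≤ ∑ i ∈ S, k * w i :=
        Finset.sum_le_sum fun i _ => Int.floor_le _
      rw [← Finset.mul_sum] at h1
      have h2 := hw i
      have : (k:ℝ) * ∑ i ∈ S, w i ≤ k * 1 := mul_le_mul_of_nonneg_left (by linarith) hkR.le
      linarith
    · simp only [N, if_neg h]
      exact_mod_cast Int.floor_nonneg.2 (mul_nonneg hkR.le (hw i).le)
  choose n hn using fun i j => hint (z i) (hzV i) j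
  refine ⟨∑ i, ((N i : ℝ) / k) • z i, ?_, ?_, ?_⟩
  · refine (convex_convexHull ℝ V).sum_mem (fun i _ => div_nonneg (hNnn i) hkR.le) ?_
      (fun i _ => subset_convexHull ℝ V (hzV i))
    rw [← Finset.sum_div, hNsum, div_self hkR.ne']
  · intro j
    refine ⟨∑ i, N i * n i j, ?_⟩
    push_cast
    rw [Finset.sum_apply, Finset.sum_div]
    refine Finset.sum_congr rfl fun i _ => ?_
    rw [← hn]
    simp only [Pi.smul_apply, smul_eq_mul]
    field_simp
  · intro j
    have e : (∑ i, ((N i : ℝ) / k) • z i) j - x j =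
        ∑ i ∈ S, ((N i : ℝ) / k - w i) * (z i j - z i0 j) := by
      rw [← hwx]
      simp only [Finset.sum_apply, Pi.smul_apply, smul_eq_mul]
      rw [← Finset.sum_sub_distrib, split]
      have h0 : (N i0 : ℝ) / k - w i0 = - ∑ i ∈ S, ((N i : ℝ) / k - w i) := by
        have := split (fun i => (N i : ℝ) / k - w i)
        rw [Finset.sum_sub_distrib, ← Finset.sum_div, hNsum, div_self hkR.ne', hw1] at this
        linarith
      rw [← sub_mul, h0, neg_mul, Finset.sum_mul, ← Finset.sum_neg_distrib, ← Finset.sum_add_distrib]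
      exact Finset.sum_congr rfl fun i _ => by ring
    rw [e]
    have hM0 : 0 ≤ M := (abs_nonneg _).trans (hV _ (hzV i0) j)
    calc |∑ i ∈ S, ((N i : ℝ) / k - w i) * (z i j - z i0 j)|
        ≤ ∑ i ∈ S, |((N i : ℝ) / k - w i) * (z i j - z i0 j)| := Finset.abs_sum_le_sum_abs _ _
      _ ≤ ∑ i ∈ S, (1 / k) * (2 * M) := by
        refine Finset.sum_le_sum fun i hi => ?_
        rw [abs_mul]
        refine mul_le_mul ?_ ?_ (abs_nonneg _) (by positivity)
        · rw [hNS i hi]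
          have h1 := Int.floor_le (k * w i)
          have h2 := Int.lt_floor_add_one (k * w i)
          have : ((⌊k * w i⌋ : ℤ) : ℝ) / k - w i = (⌊k * w i⌋ - k * w i) / k := by field_simp
          rw [this, abs_div, abs_of_pos hkR]
          gcongr
          rw [abs_le]
          constructor <;> linarith
        · have h1 := abs_le.1 (hV _ (hzV i) j)
          have h2 := abs_le.1 (hV _ (hzV i0) j)
          rw [abs_le]
          constructor <;> linarith [h1.1, h1.2, h2.1, h2.2]
      _ = S.card * (2 * M) / k := by rw [Finset.sum_const, nsmul_eq_mul]; ring
      _ ≤ d * (2 * M) / k := by gcongr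

/-- Grid Approximation Theorem. For a polytope
`P = {(x,z) : Ax + Bz ≤ b}` with integer data, bounded with `|xᵢ| ≤ M` on `P`,
there is a positive integer `Δ` such that for every mixed-integer point
`(x*, z*) ∈ P ∩ (ℝ^{d₁} × ℤ^{d₂})`, every `δ > 0` and every integer
`k ≥ (2/δ)·d₁·M`, the lattice `(1/(kΔ))ℤ^{d₁}` contains a point `x` with
`(x, z*) ∈ P` and `‖x - x*‖_∞ ≤ δ`. -/
theorem stmt_2 (p d1 d2 : ℕ)
    (A : Fin p → Fin d1 → ℤ) (B : Fin p → Fin d2 → ℤ) (b : Fin p → ℤ)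
    (P : Set ((Fin d1 → ℝ) × (Fin d2 → ℝ)))
    (hP : P = {xz | ∀ i, (∑ j, (A i j : ℝ) * xz.1 j) + (∑ j, (B i j : ℝ) * xz.2 j) ≤ (b i : ℝ)})
    (hbdd : Bornology.IsBounded P)
    (M : ℝ) (hM : ∀ xz ∈ P, ∀ i, |xz.1 i| ≤ M) :
    ∃ Δ : ℕ, 0 < Δ ∧
      ∀ (xstar : Fin d1 → ℝ) (zstar : Fin d2 → ℤ),
        (xstar, fun i => (zstar i : ℝ)) ∈ P →
        ∀ δ : ℝ, 0 < δ →
        ∀ k : ℤ, (2 / δ) * (d1 : ℝ) * M ≤ (k : ℝ) →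
          ∃ x : Fin d1 → ℝ,
            (∀ i, ∃ n : ℤ, x i = (n : ℝ) / ((k : ℝ) * (Δ : ℝ))) ∧
            (x, fun i => (zstar i : ℝ)) ∈ P ∧ ‖x - xstar‖ ≤ δ := by
  obtain ⟨Δ, hΔ, hvert⟩ := vertex_aux p d1 A
  refine ⟨Δ, hΔ, ?_⟩
  intro xs zs hxs δ hδ k hk
  rcases Nat.eq_zero_or_pos d1 with hd | hd
  · subst hd
    exact ⟨xs, fun i => i.elim0, hxs, by rw [sub_self, norm_zero]; exact hδ.le⟩
  have hM0 : 0 ≤ M := (abs_nonneg _).trans (hM _ hxs ⟨0, hd⟩)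
  have hdR : (0:ℝ) < d1 := by exact_mod_cast hd
  have hk0 : (0:ℝ) ≤ k := le_trans (by positivity) hk
  rcases hk0.eq_or_lt with hkz | hkpos
  · have hM' : M = 0 := by
      rw [← hkz] at hk
      by_contra h
      have : 0 < M := lt_of_le_of_ne hM0 (Ne.symm h)
      have : 0 < 2 / δ * d1 * M := by positivity
      linarith
    refine ⟨xs, fun i => ⟨0, ?_⟩, hxs, by simpa using hδ.le⟩
    have := hM _ hxs i
    rw [hM'] at this
    simpa using this
  let c : Fin p → ℤ := fun i => b i - ∑ j, B i j * zs j
  let Q : Set (Fin d1 → ℝ) := {x | ∀ i, ∑ j, (A i j : ℝ) * x j ≤ (c i : ℝ)}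
  have hQP : ∀ x, x ∈ Q ↔ (x, fun i => (zs i : ℝ)) ∈ P := by
    intro x
    rw [hP]
    simp only [Q, c, Set.mem_setOf_eq]
    push_cast
    exact forall_congr' fun i => le_sub_iff_add_le
  have hQM : ∀ x ∈ Q, ∀ i, |x i| ≤ M := fun x hx => hM _ ((hQP x).1 hx)
  have hQclosed : IsClosed Q := by
    simp only [Q, Set.setOf_forall]
    exact isClosed_iInter fun i => isClosed_le (by fun_prop) continuous_const
  have hQconv : Convex ℝ Q := by
    intro x hx y hy s t hs ht hst i
    have h1 := mul_le_mul_of_nonneg_left (hx i) hs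
    have h2 := mul_le_mul_of_nonneg_left (hy i) ht
    have : ∑ j, (A i j : ℝ) * (s • x + t • y) j
        = s * ∑ j, (A i j : ℝ) * x j + t * ∑ j, (A i j : ℝ) * y j := by
      rw [Finset.mul_sum, Finset.mul_sum, ← Finset.sum_add_distrib]
      refine Finset.sum_congr rfl fun j _ => ?_
      simp only [Pi.add_apply, Pi.smul_apply, smul_eq_mul]; ring
    rw [this]
    calc _ ≤ s * (c i : ℝ) + t * (c i : ℝ) := add_le_add h1 h2
      _ = c i := by rw [← add_mul, hst, one_mul]
  have hQcpt : IsCompact Q := by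
    refine Metric.isCompact_of_isClosed_isBounded hQclosed ?_
    refine (Metric.isBounded_closedBall (x := (0 : Fin d1 → ℝ)) (r := M)).subset fun x hx => ?_
    rw [mem_closedBall_zero_iff, pi_norm_le_iff_of_nonneg hM0]
    exact hQM x hx
  let V := Set.extremePoints ℝ Q
  have hVQ : V ⊆ Q := extremePoints_subset
  have hVint : ∀ v ∈ V, ∀ j, ∃ n : ℤ, (Δ : ℝ) * v j = n := fun v hv => hvert c v hv
  have hΔR : (0:ℝ) < Δ := by exact_mod_cast hΔ
  have hVfin : V.Finite := by
    let f : (Fin d1 → ℤ) → (Fin d1 → ℝ) := fun n j => (n j : ℝ) / Δ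
    refine ((Set.finite_Icc (fun _ : Fin d1 => -⌈Δ * M⌉) (fun _ => ⌈Δ * M⌉)).image f).subset ?_
    intro v hv
    choose n hn using hVint v hv
    have hb : ∀ j, |(n j : ℝ)| ≤ (⌈Δ * M⌉ : ℤ) := by
      intro j
      rw [← hn j, abs_mul, abs_of_pos hΔR]
      exact (mul_le_mul_of_nonneg_left (hQM v (hVQ hv) j) hΔR.le).trans (Int.le_ceil _)
    refine ⟨n, ⟨fun j => ?_, fun j => ?_⟩, ?_⟩
    · have := (abs_le.1 (hb j)).1
      exact_mod_cast this
    · have := (abs_le.1 (hb j)).2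
      exact_mod_cast this
    · funext j
      simp only [f]
      rw [← hn j]
      field_simp
  have hhull : convexHull ℝ V = Q := by
    rw [← closure_convexHull_extremePoints hQcpt hQconv]
    exact (hVfin.isCompact_convexHull (𝕜 := ℝ)).isClosed.closure_eq.symm
  have hxQ : xs ∈ convexHull ℝ V := by rw [hhull]; exact (hQP xs).2 hxs
  obtain ⟨y, hy, hyint, hyd⟩ := round_aux Δ hΔ V M (fun v hv => hQM v (hVQ hv)) hVint xs hxQ k
    (by exact_mod_cast hkpos)
  refine ⟨y, hyint, (hQP y).1 (hhull ▸ hy), ?_⟩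
  rw [pi_norm_le_iff_of_nonneg hδ.le]
  intro j
  refine (hyd j).trans ?_
  rw [div_le_iff₀ hkpos]
  have := mul_le_mul_of_nonneg_left hk hδ.le
  calc (d1:ℝ) * (2 * M) = δ * (2 / δ * d1 * M) := by field_simp
    _ ≤ _ := this
end

section
/- Let $f \in \mathbb{Q}[x_1, \dots, x_d]$ be a polynomial of total degree at most $D$. Let $Q \subset \mathbb{R}^d$ be an integral polytope whose affine hull has dimension $d' \le d$, and let $k$ be an integer with $k \ge D \, d'$. Then $f$ is constant on $Q$ if and only if $f$ is constant on $Q \cap \frac{1}{k}\mathbb{Z}^d$. -/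
open MvPolynomial in
lemma aux_totalDegree {σ : Type*} {d : ℕ} (f : MvPolynomial (Fin d) ℚ)
    (p : Fin d → MvPolynomial σ ℝ) (hp : ∀ j, (p j).totalDegree ≤ 1) :
    (aeval p f).totalDegree ≤ f.totalDegree := by
  rw [aeval_def, eval₂_eq]
  apply totalDegree_finsetSum_le
  intro m hm
  refine (totalDegree_mul _ _).trans ?_
  have h1 : (algebraMap ℚ (MvPolynomial σ ℝ) (coeff m f)).totalDegree = 0 := by
    rw [IsScalarTower.algebraMap_apply ℚ ℝ (MvPolynomial σ ℝ), algebraMap_eq, totalDegree_C]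
  rw [h1, zero_add]
  refine (totalDegree_finsetProd _ _).trans ?_
  refine le_trans ?_ (le_totalDegree hm)
  rw [Finsupp.sum]
  apply Finset.sum_le_sum
  intro i _
  exact (totalDegree_pow _ _).trans (by simpa using Nat.mul_le_mul_left (m i) (hp i))

open MvPolynomial in
lemma aux_simplex {σ : Type*} [Fintype σ] {d D k : ℕ} (f : MvPolynomial (Fin d) ℚ)
    (hdeg : f.totalDegree ≤ D) (hk0 : 0 < k) (hk : D * Fintype.card σ ≤ k)
    (Q : Set (Fin d → ℝ)) (hQ : Convex ℝ Q)
    (a : Fin d → ℤ) (b : σ → Fin d → ℤ)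
    (ha : (fun j => (a j : ℝ)) ∈ Q) (hb : ∀ i, (fun j => (b i j : ℝ)) ∈ Q) (c : ℝ)
    (hc : ∀ x ∈ Q, (∀ i, ∃ n : ℤ, x i = (n : ℝ) / (k : ℝ)) → aeval x f = c)
    (t : σ → ℝ) :
    aeval (fun j => (a j : ℝ) + ∑ i, t i * ((b i j : ℝ) - a j)) f = c := by
  classical
  set p : Fin d → MvPolynomial σ ℝ :=
    fun j => C (a j : ℝ) + ∑ i, X i * C ((b i j : ℝ) - a j) with hp
  have hpd : ∀ j, (p j).totalDegree ≤ 1 := by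
    intro j
    refine (totalDegree_add _ _).trans (max_le (by rw [totalDegree_C]; exact zero_le_one) ?_)
    apply totalDegree_finsetSum_le
    intro i _
    exact (totalDegree_mul _ _).trans (by rw [totalDegree_C, totalDegree_X])
  have hev : ∀ s : σ → ℝ, eval s (aeval p f)
      = aeval (fun j => (a j : ℝ) + ∑ i, s i * ((b i j : ℝ) - a j)) f := by
    intro s
    have h := comp_aeval_apply (R := ℚ) p ((aeval s : MvPolynomial σ ℝ →ₐ[ℝ] ℝ).restrictScalars ℚ) f
    simp only [AlgHom.coe_restrictScalars'] at h
    rw [← aeval_eq_eval]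
    refine h.trans ?_
    congr 1
    congr 1
    funext j
    simp [hp]
  have hG : aeval p f - C c = 0 := by
    apply eq_zero_of_eval_zero_at_prod_finset _
      (fun _ => (Finset.range (D+1)).image (fun n : ℕ => (n : ℝ) / k))
    · intro i
      rw [Finset.card_image_of_injective]
      · rw [Finset.card_range, Nat.lt_succ_iff]
        exact (degreeOf_le_totalDegree _ _).trans ((totalDegree_sub_C_le _ _).trans
          ((aux_totalDegree f p hpd).trans hdeg))
      · intro m n h
        have : (k : ℝ) ≠ 0 := by positivity
        simp only at h
        field_simp at h
        exact_mod_cast h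
    · intro s hs
      have : ∀ i, ∃ n : ℕ, n ≤ D ∧ s i = (n : ℝ) / k := by
        intro i
        have := hs i
        simp only [Finset.mem_image, Finset.mem_range] at this
        obtain ⟨n, hn, h⟩ := this
        exact ⟨n, by omega, h.symm⟩
      choose n hn hsn using this
      have hkr : (0 : ℝ) < k := by exact_mod_cast hk0
      rw [map_sub, hev, eval_C, sub_eq_zero]
      apply hc
      · have h := hQ.sum_mem (t := (Finset.univ : Finset (Option σ)))
          (w := fun o => o.elim (1 - ∑ i, s i) s)
          (z := fun o => o.elim (fun j => (a j : ℝ)) (fun i j => (b i j : ℝ))) ?_ ?_ ?_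
        · convert h using 1
          funext j
          simp only [Fintype.sum_option, Option.elim]
          simp [Finset.sum_apply, mul_sub, Finset.sum_sub_distrib, sub_mul, Finset.sum_mul]
          ring
        · rintro (_ | i) _
          · simp only [Option.elim]
            rw [sub_nonneg]
            calc ∑ i, s i ≤ ∑ i : σ, (D : ℝ) / k := by
                  apply Finset.sum_le_sum
                  intro i _
                  rw [hsn]
                  gcongr
                  exact hn i
              _ = ((D * Fintype.card σ : ℕ) : ℝ) / k := by simp; ring
              _ ≤ 1 := by
                rw [div_le_one hkr]
                exact_mod_cast hk
          · simp only [Option.elim]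
            rw [hsn]; positivity
        · simp [Fintype.sum_option]
        · rintro (_ | i) _
          · exact ha
          · exact hb i
      · intro j
        refine ⟨k * a j + ∑ i, n i * (b i j - a j), ?_⟩
        push_cast
        rw [add_div, Finset.sum_div]
        congr 1
        · field_simp
        · apply Finset.sum_congr rfl
          intro i _
          rw [hsn]; ring
  have := congrArg (eval t) hG
  rwa [map_sub, hev, eval_C, map_zero, sub_eq_zero] at this

/-- constancy on an integral polytope is detected by a fine enough
grid. If `f` has total degree at most `D`, `Q` is an integral polytope whose
affine hull has dimension `d' ≤ d`, and `k ≥ D·d'`, then `f` is constant on `Q`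
iff `f` is constant on `Q ∩ (1/k)ℤ^d`. -/
theorem stmt_6 (d D : ℕ) (f : MvPolynomial (Fin d) ℚ) (hdeg : f.totalDegree ≤ D)
    (V : Finset (Fin d → ℤ)) (Q : Set (Fin d → ℝ))
    (hQ : Q = convexHull ℝ ((fun v : Fin d → ℤ => fun i => (v i : ℝ)) '' (V : Set (Fin d → ℤ))))
    (d' : ℕ) (hd' : d' = Module.finrank ℝ (affineSpan ℝ Q).direction) (hd'd : d' ≤ d)
    (k : ℕ) (hk : D * d' ≤ k) :
    (∀ x ∈ Q, ∀ y ∈ Q, MvPolynomial.aeval x f = MvPolynomial.aeval y f) ↔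
    (∀ x ∈ Q, (∀ i, ∃ n : ℤ, x i = (n : ℝ) / (k : ℝ)) →
     ∀ y ∈ Q, (∀ i, ∃ n : ℤ, y i = (n : ℝ) / (k : ℝ)) →
      MvPolynomial.aeval x f = MvPolynomial.aeval y f) := by
  constructor
  · intro h x hx _ y hy _
    exact h x hx y hy
  intro h
  have hconv : Convex ℝ Q := by rw [hQ]; exact convex_convexHull _ _
  rcases Nat.eq_zero_or_pos k with hk0 | hk0
  · subst hk0
    intro x hx y hy
    rcases Nat.mul_eq_zero.1 (Nat.le_zero.1 hk) with h0 | h0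
    · have h1 : f.totalDegree = 0 := by omega
      rw [MvPolynomial.totalDegree_eq_zero_iff_eq_C] at h1
      rw [h1]; simp
    · rw [h0] at hd'
      have h2 := Submodule.finrank_eq_zero.1 hd'.symm
      rw [direction_affineSpan] at h2
      have h3 := vsub_mem_vectorSpan ℝ hx hy
      rw [h2, Submodule.mem_bot, vsub_eq_zero_iff_eq] at h3
      rw [h3]
  have hVQ : ∀ v ∈ V, (fun j => ((v j : ℤ) : ℝ)) ∈ Q := by
    intro v hv
    rw [hQ]
    exact subset_convexHull _ _ ⟨v, hv, rfl⟩
  have hgrid : ∀ v : Fin d → ℤ, ∀ i, ∃ n : ℤ, (fun j => ((v j : ℤ) : ℝ)) i = (n : ℝ) / (k : ℝ) := by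
    intro v i
    refine ⟨k * v i, ?_⟩
    push_cast
    field_simp
  have key : ∀ x ∈ Q, ∀ v ∈ V, MvPolynomial.aeval x f
      = MvPolynomial.aeval (fun j => ((v j : ℤ) : ℝ)) f := by
    intro x hx v hv
    have hx' := hx
    rw [hQ] at hx'
    obtain ⟨ι, _, z, w, hz, hind, hw, hw1, rfl⟩ := eq_pos_convex_span_of_mem_convexHull hx'
    classical
    have hne : Nonempty ι := by
      by_contra hcon
      rw [not_nonempty_iff] at hcon
      simp at hw1
    obtain ⟨i0⟩ := hne
    have : ∀ i, ∃ u : Fin d → ℤ, u ∈ V ∧ (fun j => ((u j : ℤ) : ℝ)) = z i := by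
      intro i
      obtain ⟨u, hu, hu'⟩ := hz ⟨i, rfl⟩
      exact ⟨u, hu, hu'⟩
    choose u hu huz using this
    have hcard : Fintype.card {i // i ≠ i0} ≤ d' := by
      have h1 := hind.card_le_finrank_succ
      have h2 : vectorSpan ℝ (Set.range z) ≤ (affineSpan ℝ Q).direction := by
        rw [direction_affineSpan]
        apply vectorSpan_mono
        rw [hQ]
        exact hz.trans (subset_convexHull _ _)
      have h3 := Submodule.finrank_mono h2
      have h4 : Fintype.card {i // i ≠ i0} = Fintype.card ι - 1 := by
        simp [Fintype.card_subtype_compl]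
      omega
    have hfin := aux_simplex (σ := {i // i ≠ i0}) f hdeg hk0
      ((Nat.mul_le_mul_left D hcard).trans hk) Q hconv (u i0) (fun i => u i)
      (hVQ _ (hu i0)) (fun i => hVQ _ (hu i))
      (MvPolynomial.aeval (fun j => ((v j : ℤ) : ℝ)) f)
      (fun y hy hyk => h y hy hyk _ (hVQ v hv) (hgrid v)) (fun i => w i)
    rw [← hfin]
    congr 1
    congr 1
    funext j
    have hj : ∀ i, z i j = (u i j : ℝ) := fun i => by rw [← huz i]
    have hs := Fintype.sum_eq_add_sum_subtype_ne
      (fun i => w i * ((u i j : ℝ) - u i0 j)) i0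
    simp only [sub_self, mul_zero, zero_add] at hs
    rw [← hs]
    simp only [Finset.sum_apply, Pi.smul_apply, smul_eq_mul, hj, mul_sub,
      Finset.sum_sub_distrib, ← Finset.sum_mul, hw1]
    ring
  intro x hx y hy
  have hVne : V.Nonempty := by
    by_contra hcon
    rw [Finset.not_nonempty_iff_eq_empty] at hcon
    rw [hQ, hcon] at hx
    simp at hx
  obtain ⟨v, hv⟩ := hVne
  rw [key x hx v hv, key y hy v hv]
end

section
/- Let $f \in \mathbb{Z}[x_1, \dots, x_{d_1}, z_1, \dots, z_{d_2}]$ be a polynomial with integer coefficients and total degree at most $D$. Let $P \subseteq \mathbb{R}^{d_1} \times \mathbb{R}^{d_2}$ be a polytope, and let $\Delta$ be a positive integer such that for every $z \in \mathbb{Z}^{d_2}$ the scaled slice $\Delta P_z = \{\Delta x : (x,z) \in P\}$ is an integral polytope. Let $m = k\Delta$ where $k$ is an integer with $k \ge D \, d_1$. If $f$ is not constant on $P \cap (\mathbb{R}^{d_1} \times \mathbb{Z}^{d_2})$, then $f(x_{\max}, z_{\max}) - f(x_{\min}, z_{\min}) \ge m^{-D}$, where $(x_{\max}, z_{\max})$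 attains the maximum and $(x_{\min}, z_{\min})$ attains the minimum of $f$ over $P \cap (\mathbb{R}^{d_1} \times \mathbb{Z}^{d_2})$. -/
theorem aux_deg {σ ι : Type*} [Fintype σ] (f : MvPolynomial σ ℤ) (D : ℕ)
    (hdeg : f.totalDegree ≤ D) (g : σ → MvPolynomial ι ℝ) (hg : ∀ s, (g s).totalDegree ≤ 1) :
    (MvPolynomial.aeval g f).totalDegree ≤ D := by
  rw [MvPolynomial.aeval_def, MvPolynomial.eval₂_eq]
  apply MvPolynomial.totalDegree_finsetSum_le
  intro d hd
  refine (MvPolynomial.totalDegree_mul _ _).trans ?_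
  have h1 : (algebraMap ℤ (MvPolynomial ι ℝ) (f.coeff d)).totalDegree = 0 := by
    rw [IsScalarTower.algebraMap_apply ℤ ℝ (MvPolynomial ι ℝ), MvPolynomial.algebraMap_eq,
      MvPolynomial.totalDegree_C]
  rw [h1, zero_add]
  refine (MvPolynomial.totalDegree_finsetProd _ _).trans ?_
  refine le_trans ?_ ((MvPolynomial.le_totalDegree hd).trans hdeg)
  rw [Finsupp.sum]
  apply Finset.sum_le_sum
  intro i _
  refine (MvPolynomial.totalDegree_pow _ _).trans ?_
  calc d i * (g i).totalDegree ≤ d i * 1 := Nat.mul_le_mul_left _ (hg i)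
    _ = d i := mul_one _

theorem aux_denom {σ : Type*} [Fintype σ] (f : MvPolynomial σ ℤ) (D : ℕ)
    (hdeg : f.totalDegree ≤ D) (m : ℕ) (p : σ → ℝ) (hp : ∀ s, ∃ n : ℤ, (m : ℝ) * p s = n) :
    ∃ n : ℤ, (m : ℝ) ^ D * MvPolynomial.aeval p f = n := by
  choose q hq using hp
  refine ⟨∑ d ∈ f.support, f.coeff d * (m ^ (D - d.sum fun _ e => e) *
    ∏ i ∈ d.support, q i ^ d i), ?_⟩
  rw [MvPolynomial.aeval_def, MvPolynomial.eval₂_eq, Finset.mul_sum]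
  push_cast
  apply Finset.sum_congr rfl
  intro d hd
  have h : (d.sum fun _ e => e) ≤ D := (MvPolynomial.le_totalDegree hd).trans hdeg
  have h2 : ∏ i ∈ d.support, ((q i : ℝ)) ^ d i
      = (m : ℝ) ^ (d.sum fun _ e => e) * ∏ i ∈ d.support, p i ^ d i := by
    rw [Finsupp.sum, ← Finset.prod_pow_eq_pow_sum, ← Finset.prod_mul_distrib]
    apply Finset.prod_congr rfl
    intro i _
    rw [← hq, mul_pow]
  rw [h2, ← mul_assoc ((m : ℝ) ^ (D - d.sum fun _ e => e)), ← pow_add, Nat.sub_add_cancel h]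
  simp only [algebraMap_int_eq, eq_intCast]
  ring

theorem aux_grid {σ ι : Type*} [Fintype σ] [Fintype ι] (f : MvPolynomial σ ℤ) (D : ℕ)
    (hdeg : f.totalDegree ≤ D) (k : ℕ) (hk : 0 < k) (b : σ → ℝ) (L : σ → ι → ℝ) (c : ℝ)
    (h : ∀ a : ι → ℕ, (∀ i, a i ≤ D) →
      MvPolynomial.aeval (fun s => b s + ∑ i, ((a i : ℝ) / k) * L s i) f = c) (t : ι → ℝ) :
    MvPolynomial.aeval (fun s => b s + ∑ i, t i * L s i) f = c := by
  classical
  let g : σ → MvPolynomial ι ℝ := fun s =>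
    MvPolynomial.C (b s) + ∑ i, MvPolynomial.X i * MvPolynomial.C (L s i)
  have hg : ∀ s, (g s).totalDegree ≤ 1 := by
    intro s
    refine (MvPolynomial.totalDegree_add _ _).trans ?_
    rw [MvPolynomial.totalDegree_C]
    refine max_le (by norm_num) ?_
    apply MvPolynomial.totalDegree_finsetSum_le
    intro i _
    refine (MvPolynomial.totalDegree_mul _ _).trans ?_
    simp
  have hev : ∀ t : ι → ℝ, MvPolynomial.eval t (MvPolynomial.aeval g f)
      = MvPolynomial.aeval (fun s => b s + ∑ i, t i * L s i) f := by
    intro t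
    rw [MvPolynomial.aeval_def, MvPolynomial.aeval_def, MvPolynomial.eval₂_eq,
      MvPolynomial.eval₂_eq, map_sum]
    apply Finset.sum_congr rfl
    intro d _
    simp [g, map_prod]
  have hz : MvPolynomial.aeval g f - MvPolynomial.C c = 0 := by
    apply MvPolynomial.eq_zero_of_eval_zero_at_prod_finset _
      (fun _ => (Finset.range (D + 1)).image (fun n : ℕ => (n : ℝ) / k))
    · intro i
      rw [Finset.card_image_of_injective, Finset.card_range, Nat.lt_succ_iff]
      · refine (MvPolynomial.degreeOf_le_totalDegree _ _).trans ?_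
        refine (MvPolynomial.totalDegree_sub _ _).trans ?_
        simp [aux_deg f D hdeg g hg]
      · intro x y hxy
        have : (k : ℝ) ≠ 0 := by positivity
        simpa [div_left_inj' this] using hxy
    · intro x hx
      simp only [Finset.mem_image, Finset.mem_range, Nat.lt_succ_iff] at hx
      choose a ha hax using hx
      rw [map_sub, hev, MvPolynomial.eval_C, sub_eq_zero, ← h a ha]
      simp only [hax]
  rw [← hev, sub_eq_zero.mp hz, MvPolynomial.eval_C]

theorem aux_slice (d1 d2 D : ℕ) (f : MvPolynomial (Fin d1 ⊕ Fin d2) ℤ)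
    (hdeg : f.totalDegree ≤ D)
    (P : Set ((Fin d1 → ℝ) × (Fin d2 → ℝ)))
    (Δ : ℕ) (hΔ : 0 < Δ)
    (hslice : ∀ z : Fin d2 → ℤ, ∃ V : Finset (Fin d1 → ℤ),
      {y : Fin d1 → ℝ | ∃ x : Fin d1 → ℝ,
          (x, fun i => (z i : ℝ)) ∈ P ∧ y = fun i => (Δ : ℝ) * x i}
        = convexHull ℝ ((fun v : Fin d1 → ℤ => fun i => (v i : ℝ)) '' (V : Set (Fin d1 → ℤ))))
    (k : ℕ) (hk0 : 0 < k) (hk : D * d1 ≤ k) (c : ℝ)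
    (hc : ∀ q ∈ P, (∀ i, ∃ n : ℤ, q.2 i = (n : ℝ)) →
      (∀ i, ∃ n : ℤ, ((k * Δ : ℕ) : ℝ) * q.1 i = n) →
      MvPolynomial.aeval (Sum.elim q.1 q.2) f = c)
    (p : (Fin d1 → ℝ) × (Fin d2 → ℝ)) (hp : p ∈ P) (hpi : ∀ i, ∃ n : ℤ, p.2 i = (n : ℝ)) :
    MvPolynomial.aeval (Sum.elim p.1 p.2) f = c := by
  classical
  obtain ⟨x, z'⟩ := p
  choose z hz using hpi
  simp only at hz
  obtain rfl : z' = fun i => (z i : ℝ) := funext hz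
  obtain ⟨V, hV⟩ := hslice z
  have hΔ' : (Δ : ℝ) ≠ 0 := by positivity
  have hk' : (k : ℝ) ≠ 0 := by positivity
  have hy : (fun i => (Δ : ℝ) * x i) ∈
      convexHull ℝ ((fun v : Fin d1 → ℤ => fun i => (v i : ℝ)) '' (V : Set (Fin d1 → ℤ))) := by
    rw [← hV]; exact ⟨x, hp, rfl⟩
  obtain ⟨ι, _, v, w, hv, hind, hw0, hw1, hwx⟩ := eq_pos_convex_span_of_mem_convexHull hy
  have hcard : Fintype.card ι ≤ d1 + 1 := by
    refine hind.card_le_finrank_succ.trans ?_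
    have := Submodule.finrank_le (vectorSpan ℝ (Set.range v))
    simp at this
    omega
  have hne : Nonempty ι := by
    by_contra hne
    rw [not_nonempty_iff] at hne
    simp at hw1
  obtain ⟨i0⟩ := hne
  have hu : ∀ i, ∃ u : Fin d1 → ℤ, (fun j => (u j : ℝ)) = v i := by
    intro i
    obtain ⟨u, _, hu⟩ := hv ⟨i, rfl⟩
    exact ⟨u, hu⟩
  choose u hu using hu
  have key := aux_grid f D hdeg k hk0
    (Sum.elim (fun j => (u i0 j : ℝ) / Δ) (fun j => (z j : ℝ)))
    (Sum.elim (fun j i => ((u i j : ℝ) - u i0 j) / Δ) (fun _ _ => 0) : _ → ι → ℝ) c ?_ w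
  · rw [← key]
    congr 1
    congr 1
    funext s
    rcases s with j | j
    · have := congrFun hwx j
      simp only [Finset.sum_apply, Pi.smul_apply, smul_eq_mul, ← hu] at this
      simp only [Sum.elim_inl]
      rw [Finset.sum_congr rfl (fun i _ => mul_div_assoc _ _ _ |>.symm), ← Finset.sum_div,
        ← add_div, eq_div_iff hΔ', mul_comm, ← this]
      simp only [mul_sub, Finset.sum_sub_distrib, ← Finset.sum_mul, hw1]
      ring
    · simp
  · intro a ha
    set t : ι → ℝ := fun i => (a i : ℝ) / k with ht
    let x' : Fin d1 → ℝ := fun j => (u i0 j : ℝ) / Δ + ∑ i, t i * (((u i j : ℝ) - u i0 j) / Δ)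
    have hx' : ∀ j, (Δ : ℝ) * x' j = u i0 j + ∑ i, t i * ((u i j : ℝ) - u i0 j) := by
      intro j
      simp only [x', mul_add, Finset.mul_sum]
      congr 1
      · field_simp
      · apply Finset.sum_congr rfl
        intro i _
        field_simp
    have hmem : (fun j => (Δ : ℝ) * x' j) ∈
        convexHull ℝ ((fun v : Fin d1 → ℤ => fun i => (v i : ℝ)) '' (V : Set (Fin d1 → ℤ))) := by
      let T : ℝ := ∑ i ∈ Finset.univ.erase i0, t i
      have hT : T ≤ 1 := by
        have h1 : ∑ i ∈ Finset.univ.erase i0, a i ≤ k := by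
          refine (Finset.sum_le_card_nsmul _ _ D (fun i _ => ha i)).trans ?_
          rw [Finset.card_erase_of_mem (Finset.mem_univ _), Finset.card_univ, smul_eq_mul]
          refine le_trans ?_ hk
          rw [mul_comm]
          exact Nat.mul_le_mul_left _ (by omega)
        simp only [T, ht]
        rw [← Finset.sum_div, div_le_one (by positivity)]
        exact_mod_cast h1
      let s : ι → ℝ := fun i => if i = i0 then 1 - T else t i
      have hs : ∀ g : ι → ℝ, ∑ i, s i * g i
          = g i0 + ∑ i, t i * (g i - g i0) := by
        intro g
        rw [← Finset.add_sum_erase _ _ (Finset.mem_univ i0),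
          ← Finset.add_sum_erase _ (fun i => t i * (g i - g i0)) (Finset.mem_univ i0)]
        have : ∑ i ∈ Finset.univ.erase i0, s i * g i = ∑ i ∈ Finset.univ.erase i0, t i * g i := by
          apply Finset.sum_congr rfl
          intro i hi
          simp [s, Finset.ne_of_mem_erase hi]
        rw [this]
        simp only [mul_sub, Finset.sum_sub_distrib, ← Finset.sum_mul]
        simp only [s, if_true, T]
        ring
      have hrep : (fun j => (Δ : ℝ) * x' j) = ∑ i, s i • v i := by
        funext j
        simp only [Finset.sum_apply, Pi.smul_apply, smul_eq_mul, ← hu]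
        rw [hx', hs]
      rw [hrep]
      apply (convex_convexHull ℝ _).sum_mem
      · intro i _
        simp only [s]
        split_ifs
        · linarith
        · simp only [ht]; positivity
      · have := hs (fun _ => 1)
        simpa using this
      · intro i _
        exact subset_convexHull ℝ _ (hv ⟨i, rfl⟩)
    rw [← hV] at hmem
    obtain ⟨x'', hx''P, hxx⟩ := hmem
    have hxe : x' = x'' := by
      funext j
      exact mul_left_cancel₀ hΔ' (congrFun hxx j)
    rw [← hxe] at hx''P
    rw [← hc (x', fun i => (z i : ℝ)) hx''P (fun i => ⟨z i, rfl⟩) ?_]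
    · congr 1
      congr 1
      funext s
      rcases s with j | j
      · simp [x', ht]
      · simp
    · intro j
      refine ⟨k * u i0 j + ∑ i, (a i : ℤ) * (u i j - u i0 j), ?_⟩
      simp only
      push_cast
      rw [mul_assoc, hx', mul_add, Finset.mul_sum]
      congr 1
      apply Finset.sum_congr rfl
      intro i _
      simp only [ht]
      field_simp


/-- lower bound on the range of a non-constant integer polynomial
over the mixed-integer points of a polytope. In the setting of the
mixed-integer constancy test (with `Δ` making every scaled slice `Δ·P_z`
integral, and `m = kΔ`, `k ≥ D·d₁`), if `f` is not constant on
`P ∩ (ℝ^{d₁} × ℤ^{d₂})`, then `f(x_max, z_max) - f(x_min, z_min) ≥ m^{-D}`. -/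
theorem stmt_8 (d1 d2 D : ℕ) (f : MvPolynomial (Fin d1 ⊕ Fin d2) ℤ)
    (hdeg : f.totalDegree ≤ D)
    (P : Set ((Fin d1 → ℝ) × (Fin d2 → ℝ)))
    (hpoly : ∃ W : Finset ((Fin d1 → ℝ) × (Fin d2 → ℝ)), P = convexHull ℝ (W : Set _))
    (Δ : ℕ) (hΔ : 0 < Δ)
    (hslice : ∀ z : Fin d2 → ℤ, ∃ V : Finset (Fin d1 → ℤ),
      {y : Fin d1 → ℝ | ∃ x : Fin d1 → ℝ,
          (x, fun i => (z i : ℝ)) ∈ P ∧ y = fun i => (Δ : ℝ) * x i}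
        = convexHull ℝ ((fun v : Fin d1 → ℤ => fun i => (v i : ℝ)) '' (V : Set (Fin d1 → ℤ))))
    (k m : ℕ) (hk : D * d1 ≤ k) (hm : m = k * Δ)
    (xzmax xzmin : (Fin d1 → ℝ) × (Fin d2 → ℝ))
    (hmaxmem : xzmax ∈ P) (hmaxint : ∀ i, ∃ n : ℤ, xzmax.2 i = (n : ℝ))
    (hminmem : xzmin ∈ P) (hminint : ∀ i, ∃ n : ℤ, xzmin.2 i = (n : ℝ))
    (hmax : ∀ xz ∈ P, (∀ i, ∃ n : ℤ, xz.2 i = (n : ℝ)) →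
      MvPolynomial.aeval (Sum.elim xz.1 xz.2) f
        ≤ MvPolynomial.aeval (Sum.elim xzmax.1 xzmax.2) f)
    (hmin : ∀ xz ∈ P, (∀ i, ∃ n : ℤ, xz.2 i = (n : ℝ)) →
      MvPolynomial.aeval (Sum.elim xzmin.1 xzmin.2) f
        ≤ MvPolynomial.aeval (Sum.elim xz.1 xz.2) f)
    (hnc : ¬ (∀ xz ∈ P, (∀ i, ∃ n : ℤ, xz.2 i = (n : ℝ)) →
      ∀ yw ∈ P, (∀ i, ∃ n : ℤ, yw.2 i = (n : ℝ)) →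
        MvPolynomial.aeval (Sum.elim xz.1 xz.2) f
          = MvPolynomial.aeval (Sum.elim yw.1 yw.2) f)) :
    ((m : ℝ) ^ D)⁻¹ ≤
      MvPolynomial.aeval (Sum.elim xzmax.1 xzmax.2) f
        - MvPolynomial.aeval (Sum.elim xzmin.1 xzmin.2) f := by
  have hval : ∀ p ∈ P, ∀ q ∈ P, (∀ i, ∃ n : ℤ, p.2 i = (n : ℝ)) →
      (∀ i, ∃ n : ℤ, q.2 i = (n : ℝ)) →
      MvPolynomial.aeval (Sum.elim p.1 p.2) f - MvPolynomial.aeval (Sum.elim q.1 q.2) f ≤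
      MvPolynomial.aeval (Sum.elim xzmax.1 xzmax.2) f
        - MvPolynomial.aeval (Sum.elim xzmin.1 xzmin.2) f := by
    intro p hp q hq hpi hqi
    linarith [hmax p hp hpi, hmin q hq hqi]
  rcases Nat.eq_zero_or_pos k with hk0 | hk0
  · rcases Nat.eq_zero_or_pos D with hD | hD
    · exfalso
      apply hnc
      intro p _ _ q _ _
      have h0 : f.totalDegree = 0 := by omega
      rw [MvPolynomial.totalDegree_eq_zero_iff_eq_C.mp h0]
      simp
    · have : (m : ℝ) = 0 := by rw [hm, hk0]; simp
      rw [this, zero_pow hD.ne', inv_zero]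
      have := hval xzmax hmaxmem xzmax hmaxmem hmaxint hmaxint
      linarith
  · have hm0 : (0 : ℝ) < m := by rw [hm]; positivity
    by_contra hcon
    let lat : (Fin d1 → ℝ) × (Fin d2 → ℝ) → Prop := fun q =>
      q ∈ P ∧ (∀ i, ∃ n : ℤ, q.2 i = (n : ℝ)) ∧ (∀ i, ∃ n : ℤ, ((k * Δ : ℕ) : ℝ) * q.1 i = n)
    have hlat : ∀ p q, lat p → lat q →
        MvPolynomial.aeval (Sum.elim p.1 p.2) f ≤ MvPolynomial.aeval (Sum.elim q.1 q.2) f := by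
      intro p q hp hq
      by_contra hlt
      push Not at hlt
      have hd : ∀ p, lat p → ∃ n : ℤ,
          (m : ℝ) ^ D * MvPolynomial.aeval (Sum.elim p.1 p.2) f = n := by
        intro p hp
        apply aux_denom f D hdeg
        rintro (j | j)
        · rw [hm]; exact hp.2.2 j
        · obtain ⟨n, hn⟩ := hp.2.1 j
          exact ⟨m * n, by simp [hn]⟩
      obtain ⟨a, ha⟩ := hd p hp
      obtain ⟨b, hb⟩ := hd q hq
      have hpow : (0 : ℝ) < (m : ℝ) ^ D := by positivity
      have hab : (b : ℝ) < a := by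
        rw [← ha, ← hb]; exact mul_lt_mul_of_pos_left hlt hpow
      have hab' : (b : ℝ) + 1 ≤ a := by
        have : b < a := by exact_mod_cast hab
        exact_mod_cast this
      apply hcon
      refine le_trans ?_ (hval p hp.1 q hq.1 hp.2.1 hq.2.1)
      rw [inv_le_iff_one_le_mul₀' hpow, mul_sub, ha, hb]
      linarith
    have hsl := aux_slice d1 d2 D f hdeg P Δ hΔ hslice k hk0 hk
    by_cases hex : ∃ q, lat q
    · obtain ⟨q, hq⟩ := hex
      have h1 := hsl (MvPolynomial.aeval (Sum.elim q.1 q.2) f) (fun p h1 h2 h3 =>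
        le_antisymm (hlat p q ⟨h1, h2, h3⟩ hq) (hlat q p hq ⟨h1, h2, h3⟩))
      apply hnc
      intro p hp hpi r hr hri
      rw [h1 p hp hpi, h1 r hr hri]
    · have h1 := fun c => hsl c (fun p h1 h2 h3 => (hex ⟨p, h1, h2, h3⟩).elim)
        xzmax hmaxmem hmaxint
      have h2 := h1 0
      rw [h1 1] at h2
      norm_num at h2
end
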